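/- Let k be a field and G a bipartite graph. Then the edge ideal I of G satisfies the colex lower bound: if J is the unique colexsegment-generated ideal in degree 2 with the same number of minimal generators as I, then β_j(I) ≥ β_j(J) for all j. -/

import Mathlib

open Finset

/-- An abstract simplicial complex on the vertex type `V`: a collection of
finite subsets of `V` (the *faces*) closed under taking subsets. -/
structure SimpComplex (V : Type*) where
  faces : Set (Finset V)
  down_closed : ∀ F ∈ faces, ∀ G ⊆ F, G ∈ faces

namespace SimpComplex

variable {V : Type*}

/-- The induced subcomplex `Γ[W]` of `Γ` on a set `W` of vertices. -/
def induced (K : SimpComplex V) (W : Finset V) : SimpComplex V where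
  faces := {F | F ∈ K.faces ∧ F ⊆ W}
  down_closed := fun F hF G hG => ⟨K.down_closed F hF.1 G hG, hG.trans hF.2⟩

/-- A simplicial complex is a cone with apex `v` if `v` belongs to every
maximal face. -/
def IsConeWithApex (K : SimpComplex V) (v : V) : Prop :=
  ∀ F ∈ K.faces, (∀ G ∈ K.faces, F ⊆ G → G = F) → v ∈ F

variable [LinearOrder V] [Fintype V] (k : Type*) [Field k]

/-- The faces of cardinality `c` of a simplicial complex, as a type. -/
def Face (K : SimpComplex V) (c : ℕ) : Type _ :=
  {F : Finset V // F ∈ K.faces ∧ F.card = c}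

/-- The space of simplicial chains with coefficients in `k` in (reduced)
homological degree `c - 1`; it has a basis indexed by the faces of
cardinality `c`. -/
abbrev Chains (K : SimpComplex V) (c : ℕ) : Type _ := Face K c → k

/-- The simplicial boundary map, from chains on faces of cardinality `c + 1`
to chains on faces of cardinality `c`, expressed in coordinates:  the
coefficient of a face `G` in `∂ x` is a signed sum of the coefficients of
`x` at the faces `G ∪ {v}`, with the usual signs determined by the linear
order on the vertices. -/
noncomputable def boundary (K : SimpComplex V) (c : ℕ) :
    Chains k K (c + 1) →ₗ[k] Chains k K c where
  toFun x G := ∑ v ∈ (Finset.univ \ G.1).attach,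
    letI := Classical.dec (insert v.1 G.1 ∈ K.faces)
    if h : insert v.1 G.1 ∈ K.faces then
      ((-1 : k) ^ (G.1.filter (fun w => w < v.1)).card) *
        x ⟨insert v.1 G.1, h, by
          have hv : v.1 ∉ G.1 := (Finset.mem_sdiff.mp v.2).2
          rw [Finset.card_insert_of_notMem hv, G.2.2]⟩
    else 0
  map_add' x y := by
    funext G
    simp only [Pi.add_apply]
    rw [← Finset.sum_add_distrib]
    refine Finset.sum_congr rfl fun v _ => ?_
    split
    · exact mul_add _ (x _) (y _)
    · simp
  map_smul' a x := by
    funext G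
    simp only [Pi.smul_apply, RingHom.id_apply, smul_eq_mul, Finset.mul_sum]
    refine Finset.sum_congr rfl fun v _ => ?_
    split
    · exact mul_left_comm _ a (x _)
    · simp

/-- The `j`-th reduced simplicial homology `H̃_j(K; k)` (for `j : ℕ`):
cycles supported on faces of cardinality `j + 1` modulo boundaries of chains on
faces of cardinality `j + 2`.  (Note that the empty set is a face of every
nonvoid complex, so this is reduced homology.) -/
@[reducible] noncomputable def reducedHomology (K : SimpComplex V) (j : ℕ) : Type _ :=
  LinearMap.ker (boundary k K j) ⧸
    Submodule.comap (LinearMap.ker (boundary k K j)).subtype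
      (LinearMap.range (boundary k K (j + 1)))

/-- The `j`-th reduced Betti number `β̃_j(K) = dim_k H̃_j(K; k)`. -/
noncomputable def reducedBetti (K : SimpComplex V) (j : ℕ) : ℕ :=
  Module.finrank k (reducedHomology k K j)

/-- Hochster's formula, used as the definition of the fine graded Betti numbers
(graded by squarefree multidegrees, i.e. by subsets `W` of the variables) of
the squarefree monomial ideal `I_K` whose Stanley–Reisner complex is `K`:
`β_{i,W}(I_K) = dim_k H̃_{|W| - i - 2}(K[W]; k)`. -/
noncomputable def bettiFine (K : SimpComplex V) (i : ℕ) (W : Finset V) : ℕ :=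
  if i + 2 ≤ W.card then reducedBetti k (K.induced W) (W.card - i - 2) else 0

/-- The total (ungraded) Betti number `β_i`, the sum of all the fine graded
Betti numbers. -/
noncomputable def totalBetti (K : SimpComplex V) (i : ℕ) : ℕ :=
  ∑ W : Finset V, bettiFine k K i W

end SimpComplex

open SimpComplex

/-- The vertex `x_i` of `X = {x_1, …, x_n}` inside `X ⊔ Y = Fin (n + m)`. -/
def xVert {n m : ℕ} (i : Fin n) : Fin (n + m) := Fin.castAdd m i

/-- The vertex `y_j` of `Y = {y_1, …, y_m}` inside `X ⊔ Y = Fin (n + m)`. -/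
def yVert {n m : ℕ} (j : Fin m) : Fin (n + m) := Fin.natAdd n j

/-- A bipartite graph `G` on `X ⊔ Y` is given by its edge set `E ⊆ X × Y`.
`nbr E i` is the neighborhood `N(x_i) ⊆ Y` of the vertex `x_i` in `G`. -/
def nbr {n m : ℕ} (E : Finset (Fin n × Fin m)) (i : Fin n) : Finset (Fin m) :=
  Finset.univ.filter fun j => (i, j) ∈ E

/-- The degree `deg_G x_i = |N(x_i)|`. -/
def degG {n m : ℕ} (E : Finset (Fin n × Fin m)) (i : Fin n) : ℕ := (nbr E i).card

/-- The Ferrers graph `H` associated to the bipartite graph `E`: the vertex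
`x_i` is joined to exactly `y_1, …, y_{deg_G x_i}`. -/
def ferrers {n m : ℕ} (E : Finset (Fin n × Fin m)) : Finset (Fin n × Fin m) :=
  Finset.univ.filter fun p => (p.2 : ℕ) < degG E p.1

/-- The independence complex of the bipartite graph `E` (faces are the subsets
of `X ⊔ Y` containing no edge), i.e. the Stanley–Reisner complex `Δ(I)` of the
edge ideal `I` of `E`. -/
def indepComplex {n m : ℕ} (E : Finset (Fin n × Fin m)) : SimpComplex (Fin (n + m)) where
  faces := {F | ∀ p ∈ E, ¬(xVert p.1 ∈ F ∧ yVert p.2 ∈ F)}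
  down_closed := fun _ hF _ hG p hp hc => hF p hp ⟨hG hc.1, hG hc.2⟩

/-- The subset `X' ⊔ Y'` of the vertex set `X ⊔ Y = Fin (n + m)`. -/
def vset {n m : ℕ} (X' : Finset (Fin n)) (Y' : Finset (Fin m)) : Finset (Fin (n + m)) :=
  X'.image xVert ∪ Y'.image yVert

/-- The `ℤ^n`-graded Betti number `β_{i,X',•}(I)` of the edge ideal `I` of the
bipartite graph `E`, in the grading with `deg x_i = e_i` and `deg y_j = 0`:
it is the sum of the fine graded Betti numbers `β_{i, X' ⊔ Y'}(I)` over all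
`Y' ⊆ Y`. -/
noncomputable def bettiCoarse (k : Type*) [Field k] {n m : ℕ}
    (E : Finset (Fin n × Fin m)) (i : ℕ) (X' : Finset (Fin n)) : ℕ :=
  ∑ Y' : Finset (Fin m), bettiFine k (indepComplex E) i (vset X' Y')

/-- The binomial coefficient `C(a, b)` with an integer lower argument, which is
zero when `b < 0`. -/
def chooseInt (a : ℕ) (b : ℤ) : ℕ := if 0 ≤ b then a.choose b.toNat else 0

/-- The independence complex (Stanley–Reisner complex of the edge ideal) of an
arbitrary (not necessarily bipartite) graph on `Fin N`, with each edge recorded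
as an increasing pair. -/
def indepComplexGen {N : ℕ} (K : Finset (Fin N × Fin N)) : SimpComplex (Fin N) where
  faces := {F | ∀ p ∈ K, ¬(p.1 ∈ F ∧ p.2 ∈ F)}
  down_closed := fun _ hF _ hG p hp hc => hF p hp ⟨hG hc.1, hG hc.2⟩

/-- `K` is a colexsegment of 2-subsets: each edge is recorded as an increasing
pair, and `K` is an initial segment in the colex order, where
`{a₁ < b₁} <_colex {a₂ < b₂}` iff `b₁ < b₂`, or `b₁ = b₂` and `a₁ < a₂`.
The corresponding colexsegment-generated ideal is
`(x_a x_b : (a, b) ∈ K)`. -/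
def IsColexSegment {N : ℕ} (K : Finset (Fin N × Fin N)) : Prop :=
  (∀ p ∈ K, p.1 < p.2) ∧
    ∀ p ∈ K, ∀ q : Fin N × Fin N, q.1 < q.2 →
      (q.2 < p.2 ∨ (q.2 = p.2 ∧ q.1 < p.1)) → q ∈ K

namespace SimpComplex

section ChainSpace

variable {V : Type*} {k : Type*} [Field k]

variable (k) in
/-- Chains of `K` on faces of cardinality `c`, extended by zero to all finite sets. -/
def chainSpace (K : SimpComplex V) (c : ℕ) : Submodule k (Finset V → k) where
  carrier := {f | ∀ F, f F ≠ 0 → F ∈ K.faces ∧ F.card = c}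
  zero_mem' F h := (h rfl).elim
  add_mem' {f g} hf hg F h := by
    by_cases h1 : f F = 0
    · exact hg F fun h2 => h (by simp [h1, h2])
    · exact hf F h1
  smul_mem' a f hf F h := hf F fun h1 => h (by simp [h1])

theorem chainSpace_mono {K L : SimpComplex V} (h : K.faces ⊆ L.faces) (c : ℕ) :
    chainSpace k K c ≤ chainSpace k L c :=
  fun _ hf F hF => ⟨h (hf F hF).1, (hf F hF).2⟩

open Classical in
variable (k) in
/-- Extension by zero of a simplicial chain. -/
noncomputable def extendChain (K : SimpComplex V) (c : ℕ) : Chains k K c →ₗ[k] (Finset V → k) where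
  toFun x F := if h : F ∈ K.faces ∧ F.card = c then x ⟨F, h⟩ else 0
  map_add' x y := by
    ext F
    by_cases h : F ∈ K.faces ∧ F.card = c
    · simp only [Pi.add_apply, dif_pos h]
      rfl
    · simp [h]
  map_smul' a x := by
    ext F
    by_cases h : F ∈ K.faces ∧ F.card = c
    · simp only [Pi.smul_apply, RingHom.id_apply, dif_pos h]
      rfl
    · simp [h]

theorem extendChain_of_face {K : SimpComplex V} {c : ℕ} (x : Chains k K c) {F : Finset V}
    (h : F ∈ K.faces ∧ F.card = c) : extendChain k K c x F = x ⟨F, h⟩ := dif_pos h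

theorem extendChain_of_not_face {K : SimpComplex V} {c : ℕ} (x : Chains k K c) {F : Finset V}
    (h : ¬ (F ∈ K.faces ∧ F.card = c)) : extendChain k K c x F = 0 := dif_neg h

theorem extendChain_injective (K : SimpComplex V) (c : ℕ) :
    Function.Injective (extendChain k K c) := by
  intro x y h
  ext F
  have := congrFun h F.1
  rwa [extendChain_of_face x F.2, extendChain_of_face y F.2] at this

theorem range_extendChain (K : SimpComplex V) (c : ℕ) :
    LinearMap.range (extendChain k K c) = chainSpace k K c := by
  ext f
  constructor
  · rintro ⟨x, rfl⟩ F hF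
    by_contra h
    exact hF (extendChain_of_not_face x h)
  · intro hf
    refine ⟨fun F => f F.1, ?_⟩
    ext F
    by_cases h : F ∈ K.faces ∧ F.card = c
    · rw [extendChain_of_face _ h]
    · rw [extendChain_of_not_face _ h]
      by_contra h'
      exact h (hf F (Ne.symm h'))

end ChainSpace

section ExteriorModel

variable {V : Type*} [LinearOrder V]

/-- The sign `(-1) ^ #{w ∈ G | w < v}`. -/
def insertionSign (k : Type*) [Field k] (v : V) (G : Finset V) : k :=
  (-1) ^ (G.filter (fun w => w < v)).card

variable {k : Type*} [Field k]

theorem insertionSign_mul_self (v : V) (G : Finset V) :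
    insertionSign k v G * insertionSign k v G = 1 := by
  simp [insertionSign, ← mul_pow]

theorem insertionSign_ne_zero (v : V) (G : Finset V) : insertionSign k v G ≠ 0 :=
  left_ne_zero_of_mul_eq_one (insertionSign_mul_self v G)

theorem insertionSign_insert_self (v : V) (G : Finset V) :
    insertionSign k v (insert v G) = insertionSign k v G := by
  simp [insertionSign, Finset.filter_insert]

theorem insertionSign_insert {u v : V} {G : Finset V} (hu : u ∉ G) :
    insertionSign k v (insert u G) = (if u < v then -1 else 1) * insertionSign k v G := by
  unfold insertionSign
  rw [Finset.filter_insert]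
  split_ifs
  · rw [Finset.card_insert_of_notMem (by simp [hu]), pow_succ']
  · rw [one_mul]

theorem insertionSign_mul_insert_anticomm {u v : V} {G : Finset V} (huv : u ≠ v)
    (hu : u ∉ G) (hv : v ∉ G) :
    insertionSign k u G * insertionSign k v (insert u G) =
      -(insertionSign k v G * insertionSign k u (insert v G)) := by
  rw [insertionSign_insert hu, insertionSign_insert hv]
  rcases lt_or_gt_of_ne huv with h | h <;> simp [h, h.not_gt] <;> ring

variable (k) in
/-- Contraction by the vertex `v` on the exterior algebra, whose elements are written as
coefficient functions on finite subsets of `V`. -/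
def contract (v : V) : (Finset V → k) →ₗ[k] (Finset V → k) where
  toFun f G := if v ∈ G then 0 else insertionSign k v G * f (insert v G)
  map_add' f g := by ext G; by_cases h : v ∈ G <;> simp [h, mul_add]
  map_smul' a f := by ext G; by_cases h : v ∈ G <;> simp [h, mul_left_comm]

variable (k) in
/-- Exterior multiplication by the vertex `v`. -/
def wedge (v : V) : (Finset V → k) →ₗ[k] (Finset V → k) where
  toFun f G := if v ∈ G then insertionSign k v G * f (G.erase v) else 0
  map_add' f g := by ext G; by_cases h : v ∈ G <;> simp [h, mul_add]
  map_smul' a f := by ext G; by_cases h : v ∈ G <;> simp [h, mul_left_comm]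

theorem contract_apply (v : V) (f : Finset V → k) (G : Finset V) :
    contract k v f G = if v ∈ G then 0 else insertionSign k v G * f (insert v G) := rfl

theorem wedge_apply (v : V) (f : Finset V → k) (G : Finset V) :
    wedge k v f G = if v ∈ G then insertionSign k v G * f (G.erase v) else 0 := rfl

theorem contract_contract_self (v : V) (f : Finset V → k) :
    contract k v (contract k v f) = 0 := by
  ext G
  simp [contract_apply]

theorem contract_contract_anticomm (u v : V) (f : Finset V → k) :
    contract k u (contract k v f) + contract k v (contract k u f) = 0 := by
  rcases eq_or_ne u v with rfl | huv
  · simp [contract_contract_self]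
  ext G
  by_cases hu : u ∈ G
  · simp [contract_apply, hu]
  by_cases hv : v ∈ G
  · simp [contract_apply, hv]
  simp only [Pi.add_apply, contract_apply, hu, hv, huv, huv.symm, Finset.mem_insert, or_self,
    if_false, Finset.insert_comm v u, ← mul_assoc, insertionSign_mul_insert_anticomm huv hu hv,
    Pi.zero_apply]
  ring

theorem contract_wedge_self (v : V) (f : Finset V → k) :
    contract k v (wedge k v f) + wedge k v (contract k v f) = f := by
  ext G
  by_cases hv : v ∈ G
  · have h : insertionSign k v (G.erase v) = insertionSign k v G := by
      rw [← insertionSign_insert_self v (G.erase v), Finset.insert_erase hv]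
    simp [contract_apply, wedge_apply, hv, h, ← mul_assoc, insertionSign_mul_self]
  · simp [contract_apply, wedge_apply, hv, ← mul_assoc, insertionSign_insert_self,
      insertionSign_mul_self]

theorem contract_wedge_of_ne {u v : V} (huv : u ≠ v) (f : Finset V → k) :
    contract k u (wedge k v f) + wedge k v (contract k u f) = 0 := by
  ext G
  by_cases hu : u ∈ G
  · simp [contract_apply, wedge_apply, hu, huv]
  by_cases hv : v ∈ G
  · obtain ⟨H, hH, rfl⟩ : ∃ H, v ∉ H ∧ insert v H = G :=
      ⟨G.erase v, by simp, Finset.insert_erase hv⟩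
    have huH : u ∉ H := fun h => hu (Finset.mem_insert_of_mem h)
    have h1 := insertionSign_mul_insert_anticomm (k := k) huv huH hH
    have h2 : (insert u (insert v H)).erase v = insert u H := by
      rw [Finset.insert_comm, Finset.erase_insert (by simp [huv.symm, hH])]
    have h3 : insertionSign k v (insert u (insert v H)) = insertionSign k v (insert u H) := by
      rw [Finset.insert_comm, insertionSign_insert_self]
    simp only [Pi.add_apply, contract_apply, wedge_apply, hu, if_false, Finset.mem_insert, true_or,
      or_true, if_true, h2, h3, Finset.erase_insert hH, huH, insertionSign_insert_self,
      Pi.zero_apply]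
    have h4 := insertionSign_insert (k := k) (v := u) hH
    have h5 := insertionSign_insert (k := k) (v := v) huH
    rw [h4, h5]
    rcases lt_or_gt_of_ne huv with h | h <;> simp [h, h.not_gt] <;> ring
  · simp [contract_apply, wedge_apply, hv, huv.symm]

theorem contract_mem_chainSpace {K L : SimpComplex V} {v : V}
    (h : ∀ F, v ∉ F → insert v F ∈ K.faces → F ∈ L.faces) {c : ℕ} {f : Finset V → k}
    (hf : f ∈ chainSpace k K (c + 1)) : contract k v f ∈ chainSpace k L c := by
  intro F hF
  by_cases hv : v ∈ F
  · simp [contract_apply, hv] at hF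
  · simp only [contract_apply, hv, if_false] at hF
    obtain ⟨h1, h2⟩ := hf _ (right_ne_zero_of_mul hF)
    rw [Finset.card_insert_of_notMem hv] at h2
    exact ⟨h F hv h1, by omega⟩

theorem wedge_mem_chainSpace {L : SimpComplex V} {v : V} {c : ℕ} {f : Finset V → k}
    (h : ∀ F, v ∉ F → f F ≠ 0 → insert v F ∈ L.faces ∧ F.card = c) :
    wedge k v f ∈ chainSpace k L (c + 1) := by
  intro F hF
  by_cases hv : v ∈ F
  · simp only [wedge_apply, hv, if_true] at hF
    obtain ⟨h1, h2⟩ := h _ (Finset.notMem_erase v F) (right_ne_zero_of_mul hF)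
    rw [Finset.insert_erase hv] at h1
    rw [Finset.card_erase_of_mem hv] at h2
    have := Finset.card_pos.2 ⟨v, hv⟩
    exact ⟨h1, by omega⟩
  · simp [wedge_apply, hv] at hF

variable [Fintype V]

variable (V k) in
/-- The simplicial boundary of the full simplex on `V`. -/
def simplexBoundary : (Finset V → k) →ₗ[k] (Finset V → k) := ∑ v, contract k v

theorem simplexBoundary_eq_sum (f : Finset V → k) :
    simplexBoundary V k f = ∑ v, contract k v f := by
  simp [simplexBoundary]

theorem simplexBoundary_apply (f : Finset V → k) (G : Finset V) :
    simplexBoundary V k f G = ∑ v ∈ univ \ G, insertionSign k v G * f (insert v G) := by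
  rw [simplexBoundary_eq_sum, Finset.sum_apply]
  symm
  apply Finset.sum_subset_zero_on_sdiff (Finset.subset_univ _)
  · intro v hv
    simp at hv
    simp [contract_apply, hv]
  · intro v hv
    simp at hv
    simp [contract_apply, hv]

theorem simplexBoundary_simplexBoundary (f : Finset V → k) :
    simplexBoundary V k (simplexBoundary V k f) = 0 := by
  simp only [simplexBoundary_eq_sum, map_sum]
  rw [← Finset.sum_product']
  refine Finset.sum_involution (fun p _ => p.swap) ?_ ?_ ?_ ?_
  · intro p _
    exact contract_contract_anticomm _ _ _
  · rintro ⟨u, v⟩ _ h he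
    obtain rfl : v = u := congrArg Prod.fst he
    exact h (contract_contract_self _ _)
  · simp
  · simp

theorem simplexBoundary_wedge (v : V) (f : Finset V → k) :
    simplexBoundary V k (wedge k v f) + wedge k v (simplexBoundary V k f) = f := by
  simp only [simplexBoundary_eq_sum, map_sum, ← Finset.sum_add_distrib]
  rw [Finset.sum_eq_single v]
  · exact contract_wedge_self v f
  · intro u _ hu
    exact contract_wedge_of_ne hu f
  · simp

theorem simplexBoundary_contract (v : V) (f : Finset V → k) :
    simplexBoundary V k (contract k v f) = - contract k v (simplexBoundary V k f) := by
  rw [eq_neg_iff_add_eq_zero]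
  simp only [simplexBoundary_eq_sum, map_sum, ← Finset.sum_add_distrib]
  exact Finset.sum_eq_zero fun u _ => contract_contract_anticomm u v f

theorem simplexBoundary_mem_chainSpace {K : SimpComplex V} {c : ℕ} {f : Finset V → k}
    (hf : f ∈ chainSpace k K (c + 1)) : simplexBoundary V k f ∈ chainSpace k K c := by
  rw [simplexBoundary_eq_sum]
  exact Submodule.sum_mem _ fun v _ => contract_mem_chainSpace
    (fun F _ h => K.down_closed _ h _ (Finset.subset_insert _ _)) hf

variable (k) in
/-- Cycles on faces of cardinality `c`. -/
def cycleSpace (K : SimpComplex V) (c : ℕ) : Submodule k (Finset V → k) :=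
  chainSpace k K c ⊓ LinearMap.ker (simplexBoundary V k)

variable (k) in
/-- Boundaries on faces of cardinality `c`. -/
def boundarySpace (K : SimpComplex V) (c : ℕ) : Submodule k (Finset V → k) :=
  (chainSpace k K (c + 1)).map (simplexBoundary V k)

theorem boundarySpace_le_cycleSpace (K : SimpComplex V) (c : ℕ) :
    boundarySpace k K c ≤ cycleSpace k K c := by
  rintro _ ⟨f, hf, rfl⟩
  exact ⟨simplexBoundary_mem_chainSpace hf, simplexBoundary_simplexBoundary f⟩

theorem simplexBoundary_extendChain (K : SimpComplex V) (c : ℕ) (x : Chains k K (c + 1)) :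
    simplexBoundary V k (extendChain k K (c + 1) x) = extendChain k K c (boundary k K c x) := by
  ext G
  by_cases hG : G ∈ K.faces ∧ G.card = c
  · rw [extendChain_of_face _ hG, simplexBoundary_apply, ← Finset.sum_attach]
    refine Finset.sum_congr rfl fun v _ => ?_
    have hv : v.1 ∉ G := (Finset.mem_sdiff.mp v.2).2
    by_cases h : insert v.1 G ∈ K.faces
    · rw [extendChain_of_face _ ⟨h, by rw [Finset.card_insert_of_notMem hv, hG.2]⟩, dif_pos h]
      rfl
    · rw [extendChain_of_not_face _ fun h' => h h'.1, dif_neg h, mul_zero]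
  · rw [extendChain_of_not_face _ hG]
    by_contra h
    refine hG (simplexBoundary_mem_chainSpace (k := k) (K := K) ?_ G h)
    rw [← range_extendChain]
    exact ⟨x, rfl⟩

theorem map_extendChain_ker (K : SimpComplex V) (c : ℕ) :
    (LinearMap.ker (boundary k K c)).map (extendChain k K (c + 1)) = cycleSpace k K (c + 1) := by
  ext f
  rw [cycleSpace, ← range_extendChain]
  constructor
  · rintro ⟨x, hx, rfl⟩
    refine ⟨⟨x, rfl⟩, ?_⟩
    rw [SetLike.mem_coe, LinearMap.mem_ker] at hx
    simp [simplexBoundary_extendChain, hx]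
  · rintro ⟨⟨x, rfl⟩, hx⟩
    refine ⟨x, ?_, rfl⟩
    rw [SetLike.mem_coe, LinearMap.mem_ker, simplexBoundary_extendChain] at hx
    exact extendChain_injective K c (by simpa using hx)

theorem map_extendChain_range (K : SimpComplex V) (c : ℕ) :
    (LinearMap.range (boundary k K c)).map (extendChain k K c) = boundarySpace k K c := by
  rw [boundarySpace, ← range_extendChain, ← LinearMap.range_comp, ← LinearMap.range_comp]
  congr 1
  ext1 x
  exact (simplexBoundary_extendChain K c x).symm

theorem reducedBetti_add_finrank_boundarySpace (K : SimpComplex V) (j : ℕ) :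
    reducedBetti k K j + Module.finrank k (boundarySpace k K (j + 1)) =
      Module.finrank k (cycleSpace k K (j + 1)) := by
  have : Finite (Face K (j + 1)) := Subtype.finite
  have : Finite (Face K j) := Subtype.finite
  have hle : LinearMap.range (boundary k K (j + 1)) ≤ LinearMap.ker (boundary k K j) := by
    rintro _ ⟨x, rfl⟩
    apply extendChain_injective K j
    rw [← simplexBoundary_extendChain, ← simplexBoundary_extendChain,
      simplexBoundary_simplexBoundary, map_zero]
  rw [← map_extendChain_range, ← map_extendChain_ker,
    (Submodule.equivMapOfInjective _ (extendChain_injective K (j + 1)) _).symm.finrank_eq,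
    (Submodule.equivMapOfInjective _ (extendChain_injective K (j + 1)) _).symm.finrank_eq,
    ← (Submodule.comapSubtypeEquivOfLe hle).finrank_eq]
  exact Submodule.finrank_quotient_add_finrank _

end ExteriorModel

end SimpComplex

namespace SimpComplex

section HomologyBounds

variable {k : Type*} [Field k]

/-- Rank–nullity for the restriction of a linear map to a submodule. -/
theorem finrank_map_add_finrank_inf_ker {A A' : Type*} [AddCommGroup A] [Module k A]
    [AddCommGroup A'] [Module k A'] [FiniteDimensional k A] (f : A →ₗ[k] A') (S : Submodule k A) :
    Module.finrank k (S.map f) + Module.finrank k (S ⊓ LinearMap.ker f : Submodule k A) =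
      Module.finrank k S := by
  rw [← (f.domRestrict S).finrank_range_add_finrank_ker, LinearMap.range_domRestrict,
    LinearMap.ker_domRestrict, ← Submodule.map_comap_subtype, Submodule.finrank_map_subtype_eq]

variable {V : Type*} [LinearOrder V] [Fintype V]

/-- Modulo the contractible star of `w`, homology is generated by the faces outside the star. -/
theorem reducedBetti_le_card (K : SimpComplex V) (w : V) (j : ℕ) (S : Finset (Finset V))
    (hS : ∀ F ∈ K.faces, F.card = j + 1 → w ∉ F → insert w F ∉ K.faces → F ∈ S) :
    reducedBetti k K j ≤ S.card := by
  let φ : (Finset V → k) →ₗ[k] (S → k) := LinearMap.funLeft k k Subtype.val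
  have h1 := finrank_map_add_finrank_inf_ker φ (cycleSpace k K (j + 1))
  have h2 : cycleSpace k K (j + 1) ⊓ LinearMap.ker φ ≤ boundarySpace k K (j + 1) := by
    rintro f ⟨⟨hf, hb⟩, hφ⟩
    refine ⟨wedge k w f, wedge_mem_chainSpace fun F hF hfF => ⟨?_, (hf F hfF).2⟩, ?_⟩
    · by_contra h
      exact hfF (congrFun hφ ⟨F, hS F (hf F hfF).1 (hf F hfF).2 hF h⟩)
    · have := simplexBoundary_wedge w f
      rwa [LinearMap.mem_ker.1 hb, map_zero, add_zero] at this
  have h3 := Submodule.finrank_mono h2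
  have h4 := Submodule.finrank_le ((cycleSpace k K (j + 1)).map φ)
  rw [Module.finrank_fintype_fun_eq_card, Fintype.card_coe] at h4
  have h5 := reducedBetti_add_finrank_boundarySpace (k := k) K j
  omega

/-- The homology of the link `L` of `v` in `D'` is controlled by that of `D'` and of the deletion
`D` of `v`, by the long exact sequence relating them. -/
theorem reducedBetti_link_le {L D D' : SimpComplex V} {v : V} (hLD : L.faces ⊆ D.faces)
    (hD : D.faces ⊆ D'.faces) (hv : ∀ F ∈ D.faces, v ∉ F)
    (hlink : ∀ F, v ∉ F → insert v F ∈ D'.faces → F ∈ L.faces)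
    (hcone : ∀ F ∈ L.faces, insert v F ∈ D'.faces) (j : ℕ) :
    reducedBetti k L j ≤ reducedBetti k D j + reducedBetti k D' (j + 1) := by
  have hL := reducedBetti_add_finrank_boundarySpace (k := k) L j
  have hDj := reducedBetti_add_finrank_boundarySpace (k := k) D j
  have hDj' : reducedBetti k D' (j + 1) + Module.finrank k (boundarySpace k D' (j + 2)) =
      Module.finrank k (cycleSpace k D' (j + 2)) :=
    reducedBetti_add_finrank_boundarySpace D' (j + 1)
  have contract_zero : ∀ {c : ℕ} {f : Finset V → k}, f ∈ chainSpace k D c →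
      contract k v f = 0 := by
    intro c f hf
    ext G
    by_cases h : f (insert v G) = 0
    · simp [contract_apply, h]
    · exact (hv _ (hf _ h).1 (Finset.mem_insert_self _ _)).elim
  have hsup : cycleSpace k L (j + 1) ⊔ boundarySpace k D (j + 1) ≤ cycleSpace k D (j + 1) :=
    sup_le (inf_le_inf_right _ (chainSpace_mono hLD _)) (boundarySpace_le_cycleSpace D _)
  have h1 := Submodule.finrank_mono hsup
  have h2 := Submodule.finrank_sup_add_finrank_inf_eq
    (cycleSpace k L (j + 1)) (boundarySpace k D (j + 1))
  set M := cycleSpace k L (j + 1) ⊓ boundarySpace k D (j + 1) with hM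
  let ψ := (boundarySpace k L (j + 1)).mkQ ∘ₗ contract k v
  have h3 := finrank_map_add_finrank_inf_ker ψ (cycleSpace k D' (j + 2))
  have h4 : boundarySpace k D' (j + 2) ≤ cycleSpace k D' (j + 2) ⊓ LinearMap.ker ψ := by
    refine le_inf (boundarySpace_le_cycleSpace D' _) ?_
    rintro _ ⟨f, hf, rfl⟩
    rw [LinearMap.mem_ker, LinearMap.comp_apply, Submodule.mkQ_apply,
      Submodule.Quotient.mk_eq_zero]
    refine ⟨- contract k v f, Submodule.neg_mem _ (contract_mem_chainSpace hlink hf), ?_⟩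
    rw [map_neg, simplexBoundary_contract, neg_neg]
  have h5 : M.map (boundarySpace k L (j + 1)).mkQ ≤ (cycleSpace k D' (j + 2)).map ψ := by
    rintro _ ⟨z, ⟨⟨hzL, hz⟩, u, hu, huz⟩, rfl⟩
    have hz0 : simplexBoundary V k z = 0 := hz
    have hw : wedge k v z ∈ chainSpace k D' (j + 2) :=
      wedge_mem_chainSpace fun F _ hF => ⟨hcone F (hzL F hF).1, (hzL F hF).2⟩
    refine ⟨wedge k v z - u, ⟨Submodule.sub_mem _ hw (chainSpace_mono hD _ hu), ?_⟩, ?_⟩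
    · have := simplexBoundary_wedge v z
      rw [hz0, map_zero, add_zero] at this
      rw [SetLike.mem_coe, LinearMap.mem_ker, map_sub, this, huz, sub_self]
    · have := contract_wedge_self v z
      rw [contract_zero (chainSpace_mono hLD _ hzL), map_zero, add_zero] at this
      rw [LinearMap.comp_apply, map_sub, contract_zero hu, this, sub_zero]
  have h6 := finrank_map_add_finrank_inf_ker (boundarySpace k L (j + 1)).mkQ M
  have h7 : M ⊓ LinearMap.ker (boundarySpace k L (j + 1)).mkQ ≤ boundarySpace k L (j + 1) := by
    rw [Submodule.ker_mkQ]
    exact inf_le_right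
  have h8 := Submodule.finrank_mono h4
  have h9 := Submodule.finrank_mono h5
  have h10 := Submodule.finrank_mono h7
  omega

/-- A complex is disconnected if its vertices split into two nonempty classes such that no face
meets both of them. -/
theorem one_le_reducedBetti_zero (K : SimpComplex V) (P : V → Prop) {a b : V}
    (ha : {a} ∈ K.faces) (hb : {b} ∈ K.faces) (hPa : P a) (hPb : ¬ P b)
    (hK : ∀ F ∈ K.faces, ∀ u ∈ F, ∀ v ∈ F, P u → P v) : 1 ≤ reducedBetti k K 0 := by
  classical
  have hab : a ≠ b := by
    rintro rfl
    exact hPb hPa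
  let e : Finset V → k := Pi.single {a, b} 1
  let f := simplexBoundary V k e
  have hfF : ∀ F, f F ≠ 0 → ∃ v, v ∉ F ∧ insert v F = {a, b} := by
    intro F hF
    rw [show f F = _ from simplexBoundary_apply e F] at hF
    obtain ⟨v, hv, hne⟩ := Finset.exists_ne_zero_of_sum_ne_zero hF
    refine ⟨v, (Finset.mem_sdiff.1 hv).2, ?_⟩
    by_contra h
    exact hne (by simp [e, Pi.single_eq_of_ne h])
  have hf : f ∈ cycleSpace k K 1 := by
    refine ⟨fun F hF => ?_, simplexBoundary_simplexBoundary e⟩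
    obtain ⟨v, hv, h⟩ := hfF F hF
    have hF' : F = ({a, b} : Finset V).erase v := by rw [← h, Finset.erase_insert hv]
    have hvab : v ∈ ({a, b} : Finset V) := h ▸ Finset.mem_insert_self v F
    rcases (by simpa using hvab : v = a ∨ v = b) with rfl | rfl
    · rw [Finset.erase_insert (by simpa using hab)] at hF'
      exact hF' ▸ ⟨hb, Finset.card_singleton _⟩
    · rw [Finset.pair_comm, Finset.erase_insert (by simpa using hab.symm)] at hF'
      exact hF' ▸ ⟨ha, Finset.card_singleton _⟩
  have hfB : f ∉ boundarySpace k K 1 := by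
    rintro ⟨u, hu, huf⟩
    let u' : Finset V → k := fun F => if ∀ v ∈ F, P v then u F else 0
    have h0 : simplexBoundary V k (simplexBoundary V k u') ∅ = 0 := by
      rw [simplexBoundary_simplexBoundary, Pi.zero_apply]
    have hu' : ∀ v, simplexBoundary V k u' {v} = if v = a then f {a} else 0 := by
      intro v
      have key : simplexBoundary V k u' {v} = if P v then f {v} else 0 := by
        rw [← huf, simplexBoundary_apply, simplexBoundary_apply]
        by_cases hv : P v
        · rw [if_pos hv]
          refine Finset.sum_congr rfl fun w _ => ?_
          by_cases hw : u (insert w {v}) = 0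
          · simp [u', hw]
          · have : ∀ x ∈ insert w ({v} : Finset V), P x := fun x hx =>
              hK _ (hu _ hw).1 v (by simp) x hx hv
            simp only [u', if_pos this]
        · rw [if_neg hv]
          refine Finset.sum_eq_zero fun w _ => ?_
          have : ¬ ∀ x ∈ insert w ({v} : Finset V), P x := fun h => hv (h v (by simp))
          simp only [u', if_neg this, mul_zero]
      rw [key]
      rcases eq_or_ne v a with rfl | hva
      · simp [hPa]
      rw [if_neg hva]
      by_cases hv : P v
      · rw [if_pos hv]
        by_contra hne
        obtain ⟨w, -, h⟩ := hfF _ hne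
        have hmem : v ∈ ({a, b} : Finset V) := h ▸ by simp
        rcases (by simpa using hmem : v = a ∨ v = b) with rfl | rfl
        · exact hva rfl
        · exact hPb hv
      · rw [if_neg hv]
    have hfa : f {a} = insertionSign k b {a} := by
      rw [show f {a} = _ from simplexBoundary_apply e {a}, Finset.sum_eq_single b]
      · simp [e, Finset.pair_comm b a]
      · intro v hv hvb
        have hva : v ≠ a := by simpa using hv
        rw [show e (insert v {a}) = 0 from Pi.single_eq_of_ne (fun h => ?_) _, mul_zero]
        have : v ∈ ({a, b} : Finset V) := h ▸ Finset.mem_insert_self v _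
        simp [hva, hvb] at this
      · simp [hab.symm]
    rw [simplexBoundary_apply, Finset.sdiff_empty] at h0
    simp only [insert_empty_eq, hu', mul_ite, mul_zero, Finset.sum_ite_eq', Finset.mem_univ,
      if_true, hfa] at h0
    exact mul_ne_zero (insertionSign_ne_zero _ _) (insertionSign_ne_zero _ _) h0
  have hlt : boundarySpace k K 1 < cycleSpace k K 1 :=
    lt_of_le_of_ne (boundarySpace_le_cycleSpace K 1) fun h => hfB (h ▸ hf)
  have h1 := Submodule.finrank_lt_finrank_of_lt hlt
  have h2 := reducedBetti_add_finrank_boundarySpace (k := k) K 0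
  rw [zero_add] at h2
  omega

end HomologyBounds

end SimpComplex

section Bipartite

variable {n m : ℕ}

theorem xVert_injective : Function.Injective (xVert : Fin n → Fin (n + m)) :=
  Fin.castAdd_injective n m

theorem yVert_injective : Function.Injective (yVert : Fin m → Fin (n + m)) :=
  Fin.natAdd_injective m n

theorem xVert_ne_yVert (i : Fin n) (j : Fin m) : xVert i ≠ yVert j := by
  intro h
  have := congrArg Fin.val h
  simp [xVert, yVert] at this
  omega

theorem xVert_mem_vset {X' : Finset (Fin n)} {Y' : Finset (Fin m)} {i : Fin n} :
    xVert i ∈ vset X' Y' ↔ i ∈ X' := by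
  simp [vset, xVert_injective.eq_iff, (xVert_ne_yVert _ _).symm]

theorem yVert_mem_vset {X' : Finset (Fin n)} {Y' : Finset (Fin m)} {j : Fin m} :
    yVert j ∈ vset X' Y' ↔ j ∈ Y' := by
  simp [vset, yVert_injective.eq_iff, xVert_ne_yVert]

theorem vset_injective :
    Function.Injective (fun p : Finset (Fin n) × Finset (Fin m) => vset p.1 p.2) := by
  rintro ⟨X, Y⟩ ⟨X', Y'⟩ (h : vset X Y = vset X' Y')
  ext i
  · rw [← xVert_mem_vset (Y' := Y), h, xVert_mem_vset]
  · rw [← yVert_mem_vset (X' := X), h, yVert_mem_vset]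

theorem card_vset (X' : Finset (Fin n)) (Y' : Finset (Fin m)) :
    (vset X' Y').card = X'.card + Y'.card := by
  rw [vset, Finset.card_union_of_disjoint, Finset.card_image_of_injective _ xVert_injective,
    Finset.card_image_of_injective _ yVert_injective]
  rw [Finset.disjoint_left]
  simp only [Finset.mem_image]
  rintro _ ⟨i, _, rfl⟩ ⟨j, _, h⟩
  exact xVert_ne_yVert i j h.symm

theorem eq_xVert_or_eq_yVert (v : Fin (n + m)) : (∃ i, v = xVert i) ∨ ∃ j, v = yVert j :=
  Fin.addCases (fun i => .inl ⟨i, rfl⟩) (fun j => .inr ⟨j, rfl⟩) v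

theorem subset_vset_iff {F : Finset (Fin (n + m))} {X' : Finset (Fin n)} {Y' : Finset (Fin m)} :
    F ⊆ vset X' Y' ↔ (∀ i, xVert i ∈ F → i ∈ X') ∧ ∀ j, yVert j ∈ F → j ∈ Y' := by
  constructor
  · exact fun h => ⟨fun i hi => xVert_mem_vset.1 (h hi), fun j hj => yVert_mem_vset.1 (h hj)⟩
  · rintro ⟨h1, h2⟩ v hv
    rcases eq_xVert_or_eq_yVert v with ⟨i, rfl⟩ | ⟨j, rfl⟩
    · exact xVert_mem_vset.2 (h1 i hv)
    · exact yVert_mem_vset.2 (h2 j hv)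

variable (k : Type*) [Field k] (E : Finset (Fin n × Fin m))

theorem reducedBetti_remove_neighbors_le (A : Finset (Fin n)) {Y' : Finset (Fin m)} {y : Fin m}
    (hy : y ∉ Y') (p : ℕ) :
    reducedBetti k ((indepComplex E).induced (vset (A.filter fun i => (i, y) ∉ E) Y')) p ≤
      reducedBetti k ((indepComplex E).induced (vset A Y')) p +
        reducedBetti k ((indepComplex E).induced (vset A (insert y Y'))) (p + 1) := by
  refine reducedBetti_link_le (v := yVert y) ?_ ?_ ?_ ?_ ?_ p
  · rintro F ⟨hF, hFW⟩
    rw [subset_vset_iff] at hFW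
    exact ⟨hF, subset_vset_iff.2 ⟨fun i hi => (Finset.mem_filter.1 (hFW.1 i hi)).1, hFW.2⟩⟩
  · rintro F ⟨hF, hFW⟩
    rw [subset_vset_iff] at hFW
    exact ⟨hF, subset_vset_iff.2 ⟨hFW.1, fun j hj => Finset.mem_insert_of_mem (hFW.2 j hj)⟩⟩
  · rintro F ⟨-, hFW⟩ h
    exact hy (yVert_mem_vset.1 (hFW h))
  · rintro F hyF ⟨hF, hFW⟩
    refine ⟨(indepComplex E).down_closed _ hF _ (Finset.subset_insert _ _), ?_⟩
    rw [subset_vset_iff] at hFW ⊢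
    refine ⟨fun i hi => ?_, fun j hj => ?_⟩
    · refine Finset.mem_filter.2 ⟨hFW.1 i (Finset.mem_insert_of_mem hi), fun hE => ?_⟩
      exact hF _ hE ⟨Finset.mem_insert_of_mem hi, Finset.mem_insert_self _ _⟩
    · refine Finset.mem_of_mem_insert_of_ne (hFW.2 j (Finset.mem_insert_of_mem hj)) ?_
      rintro rfl
      exact hyF hj
  · rintro F ⟨hF, hFW⟩
    rw [subset_vset_iff] at hFW
    refine ⟨?_, subset_vset_iff.2 ⟨fun i hi => ?_, fun j hj => ?_⟩⟩
    · rintro ⟨i, j⟩ hE ⟨hi, hj⟩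
      have hi' := Finset.mem_of_mem_insert_of_ne hi (xVert_ne_yVert _ _)
      rcases Finset.mem_insert.1 hj with h | hj'
      · obtain rfl : j = y := yVert_injective h
        exact (Finset.mem_filter.1 (hFW.1 i hi')).2 hE
      · exact hF _ hE ⟨hi', hj'⟩
    · exact (Finset.mem_filter.1
        (hFW.1 i (Finset.mem_of_mem_insert_of_ne hi (xVert_ne_yVert _ _)))).1
    · rcases Finset.mem_insert.1 hj with h | hj'
      · exact Finset.mem_insert.2 (.inl (yVert_injective h))
      · exact Finset.mem_insert_of_mem (hFW.2 j hj')

/-- The sum over `Y' ⊆ Y₀` of the Betti numbers of the edge ideal in the multidegrees `A ⊔ Y'`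
and homological degree `|A| + q - 2`. -/
noncomputable def strandSum (q : ℕ) (A : Finset (Fin n)) (Y₀ : Finset (Fin m)) : ℕ :=
  ∑ Y' ∈ Y₀.powerset, if q ≤ Y'.card then
    reducedBetti k ((indepComplex E).induced (vset A Y')) (Y'.card - q) else 0

theorem strandSum_remove_neighbors_le (q : ℕ) (A : Finset (Fin n)) {Y₀ : Finset (Fin m)}
    {y : Fin m} (hy : y ∉ Y₀) :
    strandSum k E q (A.filter fun i => (i, y) ∉ E) Y₀ ≤ strandSum k E q A (insert y Y₀) := by
  rw [strandSum, strandSum, Finset.sum_powerset_insert hy, ← Finset.sum_add_distrib]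
  refine Finset.sum_le_sum fun Y' hY' => ?_
  have hyY' : y ∉ Y' := fun h => hy (Finset.mem_powerset.1 hY' h)
  rw [Finset.card_insert_of_notMem hyY']
  by_cases hq : q ≤ Y'.card
  · rw [if_pos hq, if_pos hq, if_pos (by omega), Nat.sub_add_comm hq]
    exact reducedBetti_remove_neighbors_le k E A hyY' _
  · simp [hq]

theorem one_le_reducedBetti_complete {A : Finset (Fin n)} {Y' : Finset (Fin m)}
    (hA : A.Nonempty) (hY : Y'.Nonempty) (hE : ∀ i ∈ A, ∀ j ∈ Y', (i, j) ∈ E) :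
    1 ≤ reducedBetti k ((indepComplex E).induced (vset A Y')) 0 := by
  obtain ⟨a, ha⟩ := hA
  obtain ⟨b, hb⟩ := hY
  refine one_le_reducedBetti_zero _ (fun v => ∃ i, v = xVert i) (a := xVert a) (b := yVert b)
    ⟨?_, ?_⟩ ⟨?_, ?_⟩ ⟨a, rfl⟩ ?_ ?_
  · rintro p - ⟨-, h⟩
    exact xVert_ne_yVert _ _ (Finset.mem_singleton.1 h).symm
  · simpa using xVert_mem_vset.2 ha
  · rintro p - ⟨h, -⟩
    exact xVert_ne_yVert _ _ (Finset.mem_singleton.1 h)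
  · simpa using yVert_mem_vset.2 hb
  · rintro ⟨i, h⟩
    exact xVert_ne_yVert _ _ h.symm
  · rintro F ⟨hF, hFW⟩ _ hu v hv ⟨i, rfl⟩
    rcases eq_xVert_or_eq_yVert v with h | ⟨j, rfl⟩
    · exact h
    · exact (hF _ (hE i (xVert_mem_vset.1 (hFW hu)) j (yVert_mem_vset.1 (hFW hv))) ⟨hu, hv⟩).elim

theorem choose_le_strandSum {q : ℕ} (hq : 1 ≤ q) (x₀ : Fin n) (T : Finset (Fin m)) :
    Disjoint T (nbr E x₀) → ∀ A : Finset (Fin n), x₀ ∈ A →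
    (∀ x ∈ A, degG E x₀ ≤ degG E x ∧ nbr E x ⊆ T ∪ nbr E x₀) →
    (degG E x₀).choose q ≤ strandSum k E q A (T ∪ nbr E x₀) := by
  induction T using Finset.induction_on with
  | empty =>
    intro _ A hx₀ hA
    simp only [Finset.empty_union] at hA ⊢
    have hcomplete : ∀ x ∈ A, nbr E x = nbr E x₀ := fun x hx =>
      Finset.eq_of_subset_of_card_le (hA x hx).2 (hA x hx).1
    rw [degG, ← Finset.card_powersetCard, Finset.card_eq_sum_ones]
    refine (Finset.sum_le_sum fun Y' hY' => ?_).trans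
      (Finset.sum_le_sum_of_subset (f := fun Y' => if q ≤ Y'.card then
        reducedBetti k ((indepComplex E).induced (vset A Y')) (Y'.card - q) else 0)
        (fun Y' hY' => Finset.mem_powerset.2 (Finset.mem_powersetCard.1 hY').1))
    obtain ⟨hsub, hcard⟩ := Finset.mem_powersetCard.1 hY'
    rw [if_pos hcard.ge, hcard, Nat.sub_self]
    refine one_le_reducedBetti_complete k E ⟨x₀, hx₀⟩ (Finset.card_pos.1 (by omega)) ?_
    intro i hi j hj
    have : j ∈ nbr E i := hcomplete i hi ▸ hsub hj
    simpa [nbr] using this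
  | insert y T hyT ih =>
    intro hdisj A hx₀ hA
    rw [Finset.disjoint_insert_left] at hdisj
    have hy : y ∉ T ∪ nbr E x₀ := by simp [hyT, hdisj.1]
    rw [Finset.insert_union]
    refine (ih hdisj.2 _ ?_ ?_).trans (strandSum_remove_neighbors_le k E q A hy)
    · refine Finset.mem_filter.2 ⟨hx₀, fun h => hdisj.1 ?_⟩
      simpa [nbr] using h
    · intro x hx
      obtain ⟨hxA, hxy⟩ := Finset.mem_filter.1 hx
      refine ⟨(hA x hxA).1, fun j hj => ?_⟩
      have h := (hA x hxA).2 hj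
      rw [Finset.insert_union] at h
      refine Finset.mem_of_mem_insert_of_ne h ?_
      rintro rfl
      exact hxy (by simpa [nbr] using hj)

/-- If `x₀` has minimal degree `d` in `X'`, then `β_{i,X',•} ≥ C(d, i + 2 - |X'|)`. -/
theorem choose_le_bettiCoarse {i : ℕ} {X' : Finset (Fin n)} (hi : X'.card ≤ i + 1) {x₀ : Fin n}
    (hx₀ : x₀ ∈ X') (hmin : ∀ x ∈ X', degG E x₀ ≤ degG E x) :
    (degG E x₀).choose (i + 2 - X'.card) ≤ bettiCoarse k E i X' := by
  have h := choose_le_strandSum k E (q := i + 2 - X'.card) (by omega) x₀ (nbr E x₀)ᶜ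
    disjoint_compl_left X' hx₀ fun x hx => ⟨hmin x hx, fun j _ => by simp [em']⟩
  refine h.trans (le_of_eq ?_)
  have hu : (nbr E x₀)ᶜ ∪ nbr E x₀ = univ := by
    rw [Finset.union_comm]
    exact Finset.union_compl _
  rw [strandSum, hu, Finset.powerset_univ, bettiCoarse]
  refine Finset.sum_congr rfl fun Y' _ => ?_
  rw [bettiFine, card_vset]
  by_cases hc : i + 2 ≤ X'.card + Y'.card
  · rw [if_pos hc, if_pos (by omega)]
    congr 1
    omega
  · rw [if_neg hc, if_neg (by omega)]

theorem sum_bettiCoarse_le_totalBetti (i : ℕ) :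
    ∑ X' : Finset (Fin n), bettiCoarse k E i X' ≤ totalBetti k (indepComplex E) i := by
  simp only [bettiCoarse, totalBetti]
  rw [← Finset.sum_product', ← Finset.sum_image (f := bettiFine k (indepComplex E) i)
    (g := fun p : Finset (Fin n) × Finset (Fin m) => vset p.1 p.2) vset_injective.injOn]
  exact Finset.sum_le_sum_of_subset (Finset.subset_univ _)

theorem sum_choose_mul_choose_eq (r l i : ℕ) :
    ∑ t ∈ range (i + 1), r.choose t * l.choose (i + 1 - t) =
      ∑ c ∈ range l, (r + c).choose i := by
  induction l with
  | zero =>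
    refine Finset.sum_eq_zero fun t ht => ?_
    rw [Finset.mem_range] at ht
    rw [Nat.choose_eq_zero_of_lt (show 0 < i + 1 - t by omega), mul_zero]
  | succ l ih =>
    rw [Finset.sum_range_succ _ l, ← ih, Nat.add_choose_eq,
      Finset.Nat.sum_antidiagonal_eq_sum_range_succ_mk, ← Finset.sum_add_distrib]
    refine Finset.sum_congr rfl fun t ht => ?_
    rw [Finset.mem_range] at ht
    obtain ⟨s, rfl⟩ : ∃ s, i = t + s := ⟨i - t, by omega⟩
    rw [show t + s + 1 - t = s + 1 by omega, show t + s - t = s by omega, Nat.choose_succ_succ]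
    ring

/-- Lower bound for the Betti numbers of a bipartite edge ideal by those of a Ferrers graph. -/
theorem sum_ferrers_le_totalBetti (i : ℕ) (σ : Equiv.Perm (Fin n))
    (hσ : Antitone fun r => degG E (σ r)) :
    ∑ r : Fin n, ∑ c ∈ range (degG E (σ r)), ((r : ℕ) + c).choose i ≤
      totalBetti k (indepComplex E) i := by
  refine le_trans ?_ (sum_bettiCoarse_le_totalBetti k E i)
  let ι : (Σ _ : Fin n, Finset (Fin n)) → Finset (Fin n) :=
    fun p => (insert p.1 p.2).map σ.toEmbedding
  let D : Finset (Σ _ : Fin n, Finset (Fin n)) := univ.sigma fun r => (Iio r).powerset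
  have hinj : Set.InjOn ι D := by
    rintro ⟨r, T⟩ h ⟨r', T'⟩ h' he
    simp only [D, Finset.coe_sigma, Set.mem_sigma_iff, Finset.coe_powerset, Set.mem_preimage,
      Set.mem_powerset_iff, Finset.coe_subset] at h h'
    have he' : insert r T = insert r' T' := Finset.map_injective _ he
    have hlt : ∀ x ∈ T, x < r := fun x hx => Finset.mem_Iio.1 (h.2 hx)
    have hlt' : ∀ x ∈ T', x < r' := fun x hx => Finset.mem_Iio.1 (h'.2 hx)
    have hr : r = r' := by
      have h1 : r ∈ insert r' T' := he' ▸ Finset.mem_insert_self r T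
      have h2 : r' ∈ insert r T := he' ▸ Finset.mem_insert_self r' T'
      rw [Finset.mem_insert] at h1 h2
      rcases h1 with h1 | h1
      · exact h1
      rcases h2 with h2 | h2
      · exact h2.symm
      exact absurd (hlt _ h2) (hlt' _ h1).not_gt
    subst hr
    have hT : T = T' := by
      rw [← Finset.erase_insert (fun h => lt_irrefl _ (hlt r h)), he',
        Finset.erase_insert (fun h => lt_irrefl _ (hlt' r h))]
    rw [hT]
  refine le_trans ?_ (Finset.sum_le_sum_of_subset (Finset.subset_univ (D.image ι)))
  rw [Finset.sum_image hinj, Finset.sum_sigma]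
  refine Finset.sum_le_sum fun r _ => ?_
  rw [← sum_choose_mul_choose_eq]
  have hpow : ∑ t ∈ range (i + 1), (r : ℕ).choose t * (degG E (σ r)).choose (i + 1 - t) ≤
      ∑ T ∈ (Iio r).powerset, if T.card ≤ i then (degG E (σ r)).choose (i + 1 - T.card) else 0 := by
    rw [Finset.sum_powerset_apply_card
      (fun c => if c ≤ i then (degG E (σ r)).choose (i + 1 - c) else 0), Fin.card_Iio,
      Finset.sum_congr rfl fun t ht => by
        rw [← if_pos (c := t ≤ i) (t := (degG E (σ r)).choose (i + 1 - t)) (e := 0)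
          (Nat.lt_succ_iff.1 (Finset.mem_range.1 ht))]]
    refine Finset.sum_le_sum_of_ne_zero fun t _ h => Finset.mem_range.2 ?_
    by_contra hlt
    exact h (by rw [Nat.choose_eq_zero_of_lt (by omega), zero_mul])
  refine hpow.trans ?_
  refine Finset.sum_le_sum fun T hT => ?_
  rw [Finset.mem_powerset] at hT
  split_ifs with hTi
  · have hr : r ∉ T := fun h => lt_irrefl _ (Finset.mem_Iio.1 (hT h))
    have hcard : (ι ⟨r, T⟩).card = T.card + 1 := by
      rw [Finset.card_map, Finset.card_insert_of_notMem hr]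
    have := choose_le_bettiCoarse k E (i := i) (X' := ι ⟨r, T⟩) (x₀ := σ r) (by omega)
      (Finset.mem_map.2 ⟨r, Finset.mem_insert_self _ _, rfl⟩) ?_
    · rwa [hcard, show i + 2 - (T.card + 1) = i + 1 - T.card by omega] at this
    · intro x hx
      obtain ⟨s, hs, rfl⟩ := Finset.mem_map.1 hx
      refine hσ ?_
      rcases Finset.mem_insert.1 hs with rfl | hs
      · exact le_rfl
      · exact (Finset.mem_Iio.1 (hT hs)).le
  · exact Nat.zero_le _

end Bipartite

section Colex

variable {N : ℕ}

theorem bettiFine_indepComplexGen_le (k : Type*) [Field k] {K : Finset (Fin N × Fin N)}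
    (hK : IsColexSegment K) (i : ℕ) (W : Finset (Fin N)) :
    bettiFine k (indepComplexGen K) i W ≤
      (K.filter fun p => p.1 ∈ W ∧ p.2 ∈ W ∧ (∀ x ∈ W, x ≤ p.2) ∧ W.card = i + 2).card := by
  rw [bettiFine]
  split_ifs with hW
  · have hne : W.Nonempty := Finset.card_pos.1 (by omega)
    have hw := W.max'_mem hne
    have hmax : ∀ x ∈ W, x ≤ W.max' hne := fun x hx => W.le_max' x hx
    set w := W.max' hne
    refine (reducedBetti_le_card _ w _ ((K.filter fun p => p.1 ∈ W ∧ p.2 ∈ W ∧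
      (∀ x ∈ W, x ≤ p.2) ∧ W.card = i + 2).image fun p => {p.1}) ?_).trans Finset.card_image_le
    rintro F ⟨hF, hFW⟩ hcard hwF hins
    have hdep : ¬ ∀ p ∈ K, ¬(p.1 ∈ insert w F ∧ p.2 ∈ insert w F) := fun h =>
      hins ⟨h, Finset.insert_subset hw hFW⟩
    push Not at hdep
    obtain ⟨p, hpK, hp1, hp2⟩ := hdep
    have hlt := hK.1 p hpK
    have hpw : p.2 = w := by
      by_contra h
      have h2F := Finset.mem_of_mem_insert_of_ne hp2 h
      rcases Finset.mem_insert.1 hp1 with h1 | h1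
      · exact absurd (hmax _ (hFW h2F)) (h1 ▸ hlt).not_ge
      · exact hF p hpK ⟨h1, h2F⟩
    have h1F : p.1 ∈ F := Finset.mem_of_mem_insert_of_ne hp1 (hpw ▸ hlt.ne)
    have hFs : F = {p.1} := by
      refine Finset.eq_singleton_iff_unique_mem.2 ⟨h1F, fun c hc => ?_⟩
      have hcw : c < p.2 := hpw ▸ lt_of_le_of_ne (hmax c (hFW hc)) fun h => hwF (h ▸ hc)
      by_contra hne
      rcases lt_or_gt_of_ne hne with h | h
      · exact hF (c, p.1) (hK.2 p hpK (c, p.1) h (.inl hlt)) ⟨hc, h1F⟩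
      · exact hF (p.1, c) (hK.2 p hpK (p.1, c) h (.inl hcw)) ⟨h1F, hc⟩
    rw [hFs, Finset.card_singleton] at hcard
    refine Finset.mem_image.2 ⟨p, Finset.mem_filter.2 ⟨hpK, hFW h1F, hpw ▸ hw, ?_, ?_⟩, hFs.symm⟩
    · exact hpw ▸ hmax
    · omega
  · exact Nat.zero_le _

theorem card_filter_max_eq_le {a b : Fin N} (hab : a < b) (i : ℕ) :
    ((univ : Finset (Finset (Fin N))).filter fun W =>
      a ∈ W ∧ b ∈ W ∧ (∀ x ∈ W, x ≤ b) ∧ W.card = i + 2).card ≤ ((b : ℕ) - 1).choose i := by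
  have hcard : ((Iio b).erase a).card = (b : ℕ) - 1 := by
    rw [Finset.card_erase_of_mem (Finset.mem_Iio.2 hab), Fin.card_Iio]
  rw [← hcard, ← Finset.card_powersetCard]
  refine Finset.card_le_card_of_injOn (fun W => (W.erase b).erase a) ?_ ?_
  · intro W hW
    obtain ⟨-, ha, hb, hle, hc⟩ := Finset.mem_filter.1 hW
    have ha' : a ∈ W.erase b := Finset.mem_erase.2 ⟨hab.ne, ha⟩
    refine Finset.mem_powersetCard.2 ⟨Finset.erase_subset_erase a fun x hx => ?_, ?_⟩
    · rw [Finset.mem_erase] at hx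
      exact Finset.mem_Iio.2 (lt_of_le_of_ne (hle x hx.2) hx.1)
    · rw [Finset.card_erase_of_mem ha', Finset.card_erase_of_mem hb]
      omega
  · intro W hW W' hW' h
    obtain ⟨-, ha, hb, -⟩ := Finset.mem_filter.1 hW
    obtain ⟨-, ha', hb', -⟩ := Finset.mem_filter.1 hW'
    have h1 : W.erase b = W'.erase b := by
      rw [← Finset.insert_erase (Finset.mem_erase.2 ⟨hab.ne, ha⟩ : a ∈ W.erase b),
        ← Finset.insert_erase (Finset.mem_erase.2 ⟨hab.ne, ha'⟩ : a ∈ W'.erase b)]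
      exact congrArg _ h
    rw [← Finset.insert_erase hb, h1, Finset.insert_erase hb']

theorem totalBetti_indepComplexGen_le (k : Type*) [Field k] {K : Finset (Fin N × Fin N)}
    (hK : IsColexSegment K) (i : ℕ) :
    totalBetti k (indepComplexGen K) i ≤ ∑ p ∈ K, ((p.2 : ℕ) - 1).choose i := by
  refine (Finset.sum_le_sum fun W _ => bettiFine_indepComplexGen_le k hK i W).trans ?_
  simp only [Finset.card_filter]
  rw [Finset.sum_comm]
  refine Finset.sum_le_sum fun p hp => ?_
  rw [← Finset.card_filter]
  exact card_filter_max_eq_le (hK.1 p hp) i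

/-- For every set of cells `(r, c)`, the total weight `∑ g (r + c)` is at least that
of the colexsegment with equally many elements. -/
theorem IsColexSegment.sum_le_sum {n : ℕ} {K : Finset (Fin N × Fin N)} (hK : IsColexSegment K)
    {g : ℕ → ℕ} (hg : Monotone g) {D : Finset (Σ _ : Fin n, ℕ)} (hD : K.card = D.card) :
    ∑ p ∈ K, g ((p.2 : ℕ) - 1) ≤ ∑ q ∈ D, g ((q.1 : ℕ) + q.2) := by
  rcases K.eq_empty_or_nonempty with rfl | hne
  · simp
  obtain ⟨t, htK, ht⟩ := Finset.exists_max_image K (fun p => p.2) hne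
  set e := (t.2 : ℕ) - 1 with he
  have hKe : ∑ p ∈ K, g ((p.2 : ℕ) - 1) + ∑ p ∈ K, (g e - g ((p.2 : ℕ) - 1)) = K.card * g e := by
    rw [← Finset.sum_add_distrib, ← smul_eq_mul, ← Finset.sum_const]
    refine Finset.sum_congr rfl fun p hp => ?_
    have : (p.2 : ℕ) ≤ t.2 := ht p hp
    have := hg (show (p.2 : ℕ) - 1 ≤ e by omega)
    omega
  have hDe : D.card * g e ≤
      ∑ q ∈ D, g ((q.1 : ℕ) + q.2) + ∑ q ∈ D, (g e - g ((q.1 : ℕ) + q.2)) := by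
    rw [← Finset.sum_add_distrib, ← smul_eq_mul, ← Finset.sum_const]
    exact Finset.sum_le_sum fun q _ => by omega
  have hKD : ∑ q ∈ D, (g e - g ((q.1 : ℕ) + q.2)) ≤ ∑ p ∈ K, (g e - g ((p.2 : ℕ) - 1)) := by
    let h : ℕ × ℕ → ℕ := fun p => g e - g (p.2 - 1)
    let φ : (Σ _ : Fin n, ℕ) → ℕ × ℕ := fun q => (q.1, (q.1 : ℕ) + q.2 + 1)
    let ψ : Fin N × Fin N → ℕ × ℕ := fun p => (p.1, p.2)
    have hφ : Function.Injective φ := by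
      rintro ⟨r, c⟩ ⟨r', c'⟩ h
      simp only [φ, Prod.mk.injEq] at h
      obtain rfl : r = r' := Fin.ext h.1
      obtain rfl : c = c' := by omega
      rfl
    have hψ : Function.Injective ψ := fun p q h =>
      Prod.ext (Fin.ext (congrArg Prod.fst h)) (Fin.ext (congrArg Prod.snd h))
    calc ∑ q ∈ D, (g e - g ((q.1 : ℕ) + q.2)) = ∑ p ∈ D.image φ, h p := by
          rw [Finset.sum_image hφ.injOn]
          rfl
      _ ≤ ∑ p ∈ K.image ψ, h p := by
          refine Finset.sum_le_sum_of_ne_zero fun p hp hne => ?_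
          obtain ⟨⟨r, c⟩, -, rfl⟩ := Finset.mem_image.1 hp
          have hlt : (r : ℕ) + c < e := by
            by_contra hge
            exact hne (Nat.sub_eq_zero_of_le (hg (show e ≤ (r : ℕ) + c + 1 - 1 by omega)))
          have htN := t.2.isLt
          refine Finset.mem_image.2 ⟨(⟨r, by omega⟩, ⟨r + c + 1, by omega⟩), ?_, rfl⟩
          refine hK.2 t htK _ ?_ (.inl ?_) <;> rw [Fin.lt_def]
          · exact Nat.lt_succ_of_le (Nat.le_add_right _ _)
          · change (r : ℕ) + c + 1 < t.2
            omega
      _ = ∑ p ∈ K, (g e - g ((p.2 : ℕ) - 1)) := by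
          rw [Finset.sum_image hψ.injOn]
  rw [hD] at hKe
  omega

end Colex

theorem sum_degG {n m : ℕ} (E : Finset (Fin n × Fin m)) : ∑ i, degG E i = E.card := by
  rw [Finset.card_eq_sum_card_fiberwise (f := Prod.fst) (t := univ)
    fun _ _ => Finset.mem_coe.2 (Finset.mem_univ _)]
  refine Finset.sum_congr rfl fun i _ => ?_
  rw [degG, ← Finset.card_image_of_injective (nbr E i) (Prod.mk_right_injective i)]
  congr 1
  ext ⟨a, b⟩
  simp only [nbr, Finset.mem_image, Finset.mem_filter, Finset.mem_univ, true_and, Prod.mk.injEq]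
  constructor
  · rintro ⟨c, hc, rfl, rfl⟩
    exact ⟨hc, rfl⟩
  · rintro ⟨h, rfl⟩
    exact ⟨b, h, rfl, rfl⟩

/-- **Theorem.**  Let `G` be a bipartite graph.  Then the edge ideal `I` of `G`
satisfies the colex lower bound: if `J` is the colexsegment-generated ideal in
degree 2 with the same number of minimal generators as `I`, then
`β_j(I) ≥ β_j(J)` for all `j`. -/
theorem edge_ideal_satisfies_colex_lower_bound (k : Type*) [Field k]
    (n m N : ℕ) (E : Finset (Fin n × Fin m)) (K : Finset (Fin N × Fin N))
    (hK : IsColexSegment K) (hcard : K.card = E.card) (j : ℕ) :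
    totalBetti k (indepComplexGen K) j ≤ totalBetti k (indepComplex E) j := by
  let σ := Tuple.sort fun i => OrderDual.toDual (degG E i)
  have hσ : Antitone fun r => degG E (σ r) :=
    Tuple.monotone_sort fun i => OrderDual.toDual (degG E i)
  refine (totalBetti_indepComplexGen_le k hK j).trans
    (le_trans ?_ (sum_ferrers_le_totalBetti k E j σ hσ))
  rw [Finset.sum_sigma']
  refine hK.sum_le_sum (g := fun d => d.choose j) (fun _ _ h => Nat.choose_le_choose j h) ?_
  rw [Finset.card_sigma, hcard, ← sum_degG, ← Equiv.sum_comp σ]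
  simp only [Finset.card_range]
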